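/- Let n ≥ 3, let B be the open unit ball of ℝⁿ, let ωₙ be the Lebesgue measure of B, and for x, y ∈ B with x ≠ y define G(x, y) = (1/(n(n−2)ωₙ)) [ |x−y|^{2−n} − (|x|²|y|² + 1 − 2⟨x,y⟩)^{(2−n)/2} ]. Then for every x ∈ B, ∫_B G(x, y) dy = (1 − |x|²)/(2n). -/

import Mathlib

open MeasureTheory Metric Real
open scoped RealInnerProductSpace

/-- `ωₙ`: the Lebesgue volume of the open unit ball of `ℝⁿ`. -/
noncomputable def unitBallVol (n : ℕ) : ℝ :=
  (volume (ball (0 : EuclideanSpace ℝ (Fin n)) 1)).toReal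

/-- The Green function of the Laplacian on the unit ball of `ℝⁿ` with Dirichlet
boundary condition. -/
noncomputable def greenFn (n : ℕ) (x y : EuclideanSpace ℝ (Fin n)) : ℝ :=
  (1 / (n * ((n : ℝ) - 2) * unitBallVol n)) *
    (‖x - y‖ ^ ((2 : ℝ) - n) -
      (‖x‖ ^ 2 * ‖y‖ ^ 2 + 1 - 2 * ⟪x, y⟫) ^ (((2 : ℝ) - n) / 2))


open Filter Topology Set

/-- The integral over the unit ball of a directional derivative of a function that vanishes on the sphere is zero. -/
lemma integral_ball_fderiv_eq_zero {n : ℕ} (f : EuclideanSpace ℝ (Fin n) → ℝ)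
    (hf : ContDiff ℝ 1 f) (h0 : ∀ y, ‖y‖ = 1 → f y = 0) (v : EuclideanSpace ℝ (Fin n)) :
    ∫ y in ball (0 : EuclideanSpace ℝ (Fin n)) 1, fderiv ℝ f y v = 0 := by
  obtain ⟨C, hC⟩ := (isCompact_closedBall (0 : EuclideanSpace ℝ (Fin n)) 1).exists_bound_of_continuousOn
    (hf.continuous_fderiv (by simp)).continuousOn
  have hlip : ∀ y ∈ closedBall (0 : EuclideanSpace ℝ (Fin n)) 1,
      ∀ z ∈ closedBall (0 : EuclideanSpace ℝ (Fin n)) 1, ‖f z - f y‖ ≤ C * ‖z - y‖ := by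
    intro y hy z hz
    exact (convex_closedBall _ _).norm_image_sub_le_of_norm_fderiv_le
      (fun u _ => (hf.differentiable (by simp)).differentiableAt) (fun u hu => hC u hu) hy hz
  have hC0 : 0 ≤ C := (norm_nonneg _).trans (hC 0 (by simp))
  set g := (ball (0 : EuclideanSpace ℝ (Fin n)) 1).indicator f with hg
  have key : ∀ y ∈ ball (0 : EuclideanSpace ℝ (Fin n)) 1, ∀ z ∉ ball (0 : EuclideanSpace ℝ (Fin n)) 1,
      ‖f y‖ ≤ C * ‖y - z‖ := by
    intro y hy z hz
    have hy' : ‖y‖ < 1 := by simpa using hy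
    have hz' : 1 ≤ ‖z‖ := by simpa using hz
    have hcont : ContinuousOn (fun t : ℝ => ‖y + t • (z - y)‖) (Icc 0 1) := by fun_prop
    obtain ⟨t, ht, hts⟩ := intermediate_value_Icc zero_le_one hcont
      (show (1 : ℝ) ∈ Icc _ _ by simp; exact ⟨hy'.le, hz'⟩)
    have h1 := hlip (y + t • (z - y)) (by simp; exact hts.le) y (by simp; exact hy'.le)
    rw [h0 _ hts, sub_zero] at h1
    refine h1.trans ?_
    gcongr
    rw [sub_add_cancel_left, norm_neg, norm_smul, Real.norm_eq_abs, abs_of_nonneg ht.1, norm_sub_rev]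
    exact mul_le_of_le_one_left (norm_nonneg _) ht.2
  have hglip : LipschitzWith (C.toNNReal) g := by
    apply LipschitzWith.of_dist_le_mul
    intro y z
    rw [dist_eq_norm, dist_eq_norm, Real.coe_toNNReal _ hC0]
    by_cases hy : y ∈ ball (0 : EuclideanSpace ℝ (Fin n)) 1 <;>
    by_cases hz : z ∈ ball (0 : EuclideanSpace ℝ (Fin n)) 1
    · rw [hg, indicator_of_mem hy, indicator_of_mem hz]
      exact hlip z (ball_subset_closedBall hz) y (ball_subset_closedBall hy)
    · rw [hg, indicator_of_mem hy, indicator_of_notMem hz, sub_zero]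
      exact key y hy z hz
    · rw [hg, indicator_of_mem hz, indicator_of_notMem hy, zero_sub, norm_neg, norm_sub_rev]
      exact key z hz y hy
    · rw [hg, indicator_of_notMem hy, indicator_of_notMem hz, sub_zero, norm_zero]
      positivity
  have hgc : HasCompactSupport g := by
    apply HasCompactSupport.intro (isCompact_closedBall (0 : EuclideanSpace ℝ (Fin n)) 1)
    intro y hy
    exact indicator_of_notMem (fun h => hy (ball_subset_closedBall h)) _
  have hmain := LipschitzWith.integral_lineDeriv_mul_eq (μ := volume)
    (LipschitzWith.const (1 : ℝ) : LipschitzWith 0 (fun _ : EuclideanSpace ℝ (Fin n) => (1 : ℝ))) hglip hgc (-v)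
  simp only [neg_neg, mul_one] at hmain
  rw [← integral_indicator measurableSet_ball]
  have hl : (∫ x, lineDeriv ℝ (fun _ : EuclideanSpace ℝ (Fin n) => (1 : ℝ)) x (-v) * g x) = 0 := by
    simp [lineDeriv]
  rw [hl] at hmain
  rw [hmain]
  apply integral_congr_ae
  rcases Nat.eq_zero_or_pos n with hn | hn
  · subst hn
    refine Eventually.of_forall fun y => ?_
    have hv : v = 0 := Subsingleton.elim _ _
    subst hv
    simp [lineDeriv]
  have hs : ∀ᵐ y : EuclideanSpace ℝ (Fin n), y ∉ sphere (0 : EuclideanSpace ℝ (Fin n)) 1 := by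
    rw [ae_iff]
    simpa only [not_not, Set.ofPred_mem_eq] using Measure.addHaar_sphere_of_ne_zero (volume : Measure (EuclideanSpace ℝ (Fin n))) 0 one_ne_zero
  filter_upwards [hs] with y hy
  by_cases hy1 : y ∈ ball (0 : EuclideanSpace ℝ (Fin n)) 1
  · rw [indicator_of_mem hy1]
    have he : g =ᶠ[𝓝 y] f := by
      filter_upwards [isOpen_ball.mem_nhds hy1] with u hu
      exact indicator_of_mem hu _
    rw [he.lineDeriv_eq, ((hf.differentiable (by simp)) y).lineDeriv_eq_fderiv]
  · rw [indicator_of_notMem hy1]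
    have hy2 : y ∈ (closedBall (0 : EuclideanSpace ℝ (Fin n)) 1)ᶜ := by
      simp at hy hy1 ⊢
      exact lt_of_le_of_ne hy1 (Ne.symm hy)
    have he : g =ᶠ[𝓝 y] fun _ => 0 := by
      filter_upwards [isClosed_closedBall.isOpen_compl.mem_nhds hy2] with u hu
      exact indicator_of_notMem (fun h => hu (ball_subset_closedBall h)) _
    rw [he.lineDeriv_eq]
    simp [lineDeriv]

/-- One-dimensional computation of the derivative of one coordinate of the Green vector field. -/
lemma hasDerivAt_green_field (N y α β Q p : ℝ) (hQ : 0 < Q) :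
    HasDerivAt (fun t : ℝ => -2 * (y + t) * (Q + 2 * (α * y - β) * t + α * t ^ 2) ^ p
      - (1 - (N + 2 * y * t + t ^ 2)) *
        (p * (Q + 2 * (α * y - β) * t + α * t ^ 2) ^ (p - 1) * (2 * α * (y + t) - 2 * β)))
      (-2 * Q ^ p - (1 - N) * (p * (p - 1) * Q ^ (p - 2) * (2 * α * y - 2 * β) ^ 2
        + 2 * α * p * Q ^ (p - 1))) 0 := by
  have hq : HasDerivAt (fun t : ℝ => Q + 2 * (α * y - β) * t + α * t ^ 2) (2 * (α * y - β)) 0 := by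
    have := (((hasDerivAt_id (0 : ℝ)).const_mul (2 * (α * y - β))).const_add Q).add
      (((hasDerivAt_id (0 : ℝ)).pow 2).const_mul α)
    refine this.congr_deriv ?_
    simp
  have hy : HasDerivAt (fun t : ℝ => y + t) 1 0 := (hasDerivAt_id (0 : ℝ)).const_add y
  have hN : HasDerivAt (fun t : ℝ => 1 - (N + 2 * y * t + t ^ 2)) (-(2 * y)) 0 := by
    have := ((((hasDerivAt_id (0 : ℝ)).const_mul (2 * y)).const_add N).add
      ((hasDerivAt_id (0 : ℝ)).pow 2)).const_sub 1
    refine this.congr_deriv ?_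
    simp
  have hQ0 : Q + 2 * (α * y - β) * 0 + α * 0 ^ 2 ≠ 0 := by simpa using hQ.ne'
  have h1 := hq.rpow_const (p := p) (Or.inl hQ0)
  have h2 := hq.rpow_const (p := p - 1) (Or.inl hQ0)
  have h3 := ((hy.const_mul (-2)).mul h1).sub
    (hN.mul ((h2.const_mul p).mul ((hy.const_mul (2 * α)).sub_const (2 * β))))
  refine h3.congr_deriv ?_
  simp only [Pi.mul_apply, mul_zero, add_zero, ne_eq, OfNat.ofNat_ne_zero, not_false_eq_true, zero_pow]
  rw [show p - 1 - 1 = p - 2 by ring]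
  ring

lemma integral_one_add_norm_sq_rpow (n : ℕ) (hn : 3 ≤ n) :
    ∫ z : EuclideanSpace ℝ (Fin n), (1 + ‖z‖ ^ 2) ^ (((2 : ℝ) - n) / 2 - 2) = unitBallVol n := by
  have : Nontrivial (EuclideanSpace ℝ (Fin n)) := by
    apply Module.nontrivial_of_finrank_pos (R := ℝ); simp; omega
  have hn0 : (n : ℝ) ≠ 0 := by positivity
  rw [integral_fun_norm_addHaar volume (fun r : ℝ => (1 + r ^ 2) ^ (((2 : ℝ) - n) / 2 - 2))]
  have h : ∫ y in Ioi (0 : ℝ), (n : ℝ) * (y ^ (n - 1) * (1 + y ^ 2) ^ (((2 : ℝ) - n) / 2 - 2)) = 1 - 0 := by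
    have hz : (0 : ℝ) = (fun r : ℝ => (r ^ 2 / (1 + r ^ 2)) ^ ((n : ℝ) / 2)) 0 := by
      simp; rw [zero_rpow (by positivity)]
    nth_rewrite 2 [hz]
    apply integral_Ioi_of_hasDerivAt_of_nonneg
      (g := fun r : ℝ => (r ^ 2 / (1 + r ^ 2)) ^ ((n : ℝ) / 2))
    · apply ContinuousAt.continuousWithinAt
      apply ContinuousAt.rpow_const _ (Or.inr (by positivity))
      have : (1 + (0 : ℝ) ^ 2) ≠ 0 := by norm_num
      fun_prop (disch := assumption)
    · intro r hr
      have hr : 0 < r := hr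
      have hp : 0 < 1 + r ^ 2 := by positivity
      have h1 : HasDerivAt (fun r : ℝ => r ^ 2 / (1 + r ^ 2)) (2 * r / (1 + r ^ 2) ^ 2) r := by
        have := ((hasDerivAt_id r).pow 2).div (((hasDerivAt_id r).pow 2).const_add 1) hp.ne'
        refine this.congr_deriv ?_
        simp; ring
      have h2 := h1.rpow_const (p := (n : ℝ) / 2) (Or.inl (by positivity))
      convert h2 using 1
      rw [div_rpow (by positivity) hp.le, ← rpow_natCast r 2, ← rpow_mul hr.le,
        show ((2 : ℕ) : ℝ) * ((n : ℝ) / 2 - 1) = ((n - 2 : ℕ) : ℝ) by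
          rw [Nat.cast_sub (by omega)]; push_cast; ring, rpow_natCast, rpow_natCast,
        show ((2 : ℝ) - n) / 2 - 2 = -((n : ℝ) / 2 - 1) - (2 : ℕ) by push_cast; ring,
        rpow_sub hp, rpow_natCast, rpow_neg hp.le, show n - 1 = (n - 2) + 1 by omega, pow_succ]
      have := rpow_pos_of_pos hp ((n : ℝ) / 2 - 1)
      field_simp
    · intro r hr
      have hr : 0 < r := hr
      positivity
    · have h1 : Tendsto (fun r : ℝ => r ^ 2 / (1 + r ^ 2)) atTop (𝓝 1) := by
        have h3 : Tendsto (fun r : ℝ => 1 + r ^ 2) atTop atTop :=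
          tendsto_atTop_add_const_left _ _ (tendsto_pow_atTop (by norm_num))
        have h2 : Tendsto (fun r : ℝ => 1 - (1 + r ^ 2)⁻¹) atTop (𝓝 (1 - 0)) :=
          h3.inv_tendsto_atTop.const_sub 1
        rw [sub_zero] at h2
        refine h2.congr fun r => ?_
        have hp : 0 < 1 + r ^ 2 := by positivity
        field_simp
        ring
      have := h1.rpow_const (p := (n : ℝ) / 2) (Or.inl one_ne_zero)
      simpa using this
  rw [integral_const_mul, sub_zero] at h
  simp only [finrank_euclideanSpace, Fintype.card_fin, smul_eq_mul, nsmul_eq_mul]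
  rw [mul_left_comm, h, mul_one]
  rfl

/-- A quadratic polynomial; both denominators of the Green function have this form. -/
noncomputable def quad {n : ℕ} (α γ : ℝ) (x y : EuclideanSpace ℝ (Fin n)) : ℝ :=
  α * ‖y‖ ^ 2 + γ - 2 * ⟪x, y⟫

/-- Coordinate `i` of the vector field `u ∇w - w ∇u`, `u = quad ^ p`, `w = 1 - |y|²`. -/
noncomputable def field {n : ℕ} (α γ p : ℝ) (x : EuclideanSpace ℝ (Fin n)) (i : Fin n)
    (y : EuclideanSpace ℝ (Fin n)) : ℝ :=
  -2 * y i * quad α γ x y ^ p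
    - (1 - ‖y‖ ^ 2) * (p * quad α γ x y ^ (p - 1) * (2 * α * y i - 2 * x i))

lemma contDiff_quad {n : ℕ} (α γ : ℝ) (x : EuclideanSpace ℝ (Fin n)) :
    ContDiff ℝ 1 (quad α γ x) := by
  unfold quad
  exact ((contDiff_const.mul (contDiff_norm_sq ℝ)).add contDiff_const).sub
    (contDiff_const.mul (contDiff_const.inner ℝ contDiff_id))

lemma contDiff_field {n : ℕ} (α γ p : ℝ) (x : EuclideanSpace ℝ (Fin n)) (i : Fin n)
    (hq : ∀ y, 0 < quad α γ x y) : ContDiff ℝ 1 (field α γ p x i) := by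
  have h1 : ∀ s : ℝ, ContDiff ℝ 1 (fun y => quad α γ x y ^ s) := fun s =>
    (contDiff_quad α γ x).rpow_const_of_ne (fun y => (hq y).ne')
  have h2 : ContDiff ℝ 1 (fun y : EuclideanSpace ℝ (Fin n) => y i) := by fun_prop
  have h3 : ContDiff ℝ 1 (fun y : EuclideanSpace ℝ (Fin n) => ‖y‖ ^ 2) := contDiff_norm_sq ℝ
  unfold field
  exact ((contDiff_const.mul h2).mul (h1 p)).sub ((contDiff_const.sub h3).mul
    ((contDiff_const.mul (h1 _)).mul ((contDiff_const.mul h2).sub contDiff_const)))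

lemma fderiv_field {n : ℕ} (α γ p : ℝ) (x : EuclideanSpace ℝ (Fin n)) (i : Fin n)
    (hq : ∀ y, 0 < quad α γ x y) (y : EuclideanSpace ℝ (Fin n)) :
    fderiv ℝ (field α γ p x i) y (EuclideanSpace.single i 1) =
      -2 * quad α γ x y ^ p - (1 - ‖y‖ ^ 2) *
        (p * (p - 1) * quad α γ x y ^ (p - 2) * (2 * α * y i - 2 * x i) ^ 2
        + 2 * α * p * quad α γ x y ^ (p - 1)) := by
  rw [← (((contDiff_field α γ p x i hq).differentiable (by simp)) y).lineDeriv_eq_fderiv]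
  apply HasDerivAt.deriv
  have hN : ∀ t : ℝ, ‖y + t • EuclideanSpace.single i (1 : ℝ)‖ ^ 2 = ‖y‖ ^ 2 + 2 * y i * t + t ^ 2 := by
    intro t
    rw [norm_add_sq_real, inner_smul_right, norm_smul, EuclideanSpace.inner_single_right]
    simp
    ring
  have hQ : ∀ t : ℝ, quad α γ x (y + t • EuclideanSpace.single i (1 : ℝ)) =
      quad α γ x y + 2 * (α * y i - x i) * t + α * t ^ 2 := by
    intro t
    unfold quad
    rw [hN, inner_add_right, inner_smul_right, EuclideanSpace.inner_single_right]
    simp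
    ring
  refine (hasDerivAt_green_field (‖y‖ ^ 2) (y i) α (x i) (quad α γ x y) p (hq y)).congr_of_eventuallyEq
    (Eventually.of_forall fun t => ?_)
  unfold field
  simp only [hN, hQ]
  simp

lemma sum_fderiv_field {n : ℕ} (α γ : ℝ) (x : EuclideanSpace ℝ (Fin n))
    (hq : ∀ y, 0 < quad α γ x y) (y : EuclideanSpace ℝ (Fin n)) :
    ∑ i, fderiv ℝ (field α γ (((2 : ℝ) - n) / 2) x i) y (EuclideanSpace.single i 1) =
      -2 * n * (quad α γ x y ^ (((2 : ℝ) - n) / 2) + (1 - ‖y‖ ^ 2) *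
        ((((2 : ℝ) - n) / 2) * (α * γ - ‖x‖ ^ 2) * quad α γ x y ^ (((2 : ℝ) - n) / 2 - 2))) := by
  set p : ℝ := ((2 : ℝ) - n) / 2 with hp
  have hn : (n : ℝ) = 2 - 2 * p := by rw [hp]; ring
  simp_rw [fderiv_field α γ p x _ hq y]
  have hs : ∑ i, (2 * α * y i - 2 * x i) ^ 2 = 4 * (α * quad α γ x y - (α * γ - ‖x‖ ^ 2)) := by
    have h1 : ‖α • y - x‖ ^ 2 = ∑ i, (α * y i - x i) ^ 2 := by
      rw [EuclideanSpace.norm_sq_eq]; simp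
    have h2 : ‖α • y - x‖ ^ 2 = α * quad α γ x y - (α * γ - ‖x‖ ^ 2) := by
      rw [norm_sub_sq_real, norm_smul, inner_smul_left, real_inner_comm, mul_pow]
      simp [quad]
      ring
    rw [← h2, h1, Finset.mul_sum]
    exact Finset.sum_congr rfl fun i _ => by ring
  rw [Finset.sum_sub_distrib, ← Finset.mul_sum Finset.univ _ (1 - ‖y‖ ^ 2),
    Finset.sum_add_distrib, ← Finset.mul_sum Finset.univ _ (p * (p - 1) * _), hs]
  simp only [Finset.sum_const, Finset.card_univ, Fintype.card_fin, nsmul_eq_mul]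
  have h2 : quad α γ x y ^ (p - 1) = quad α γ x y ^ (p - 2) * quad α γ x y := by
    rw [← rpow_add_one (hq y).ne']; congr 1; ring
  rw [h2, hn]
  ring

lemma quad_one {n : ℕ} (e : ℝ) (x y : EuclideanSpace ℝ (Fin n)) :
    quad 1 (‖x‖ ^ 2 + e) x y = ‖x - y‖ ^ 2 + e := by
  unfold quad
  rw [norm_sub_sq_real]; ring

lemma quad_two_ge {n : ℕ} (e : ℝ) (x y : EuclideanSpace ℝ (Fin n)) :
    (1 - ‖x‖ * ‖y‖) ^ 2 + e ≤ quad (‖x‖ ^ 2) (1 + e) x y := by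
  unfold quad
  nlinarith [real_inner_le_norm x y]

lemma continuous_quad_rpow {n : ℕ} (α γ s : ℝ) (x : EuclideanSpace ℝ (Fin n))
    (hq : ∀ y, 0 < quad α γ x y) : Continuous (fun y => quad α γ x y ^ s) :=
  (contDiff_quad α γ x).continuous.rpow_const (fun y => Or.inl (hq y).ne')

lemma Continuous.integrableOn_unit_ball {n : ℕ} {f : EuclideanSpace ℝ (Fin n) → ℝ} (hf : Continuous f) :
    IntegrableOn f (ball 0 1) :=
  (hf.continuousOn.integrableOn_compact (isCompact_closedBall 0 1)).mono_set ball_subset_closedBall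

lemma green_identity (n : ℕ) (hn : 3 ≤ n) (x : EuclideanSpace ℝ (Fin n)) (e : ℝ) (he : 0 < e) :
    ∫ y in ball (0 : EuclideanSpace ℝ (Fin n)) 1,
      ((quad 1 (‖x‖ ^ 2 + e) x y ^ (((2 : ℝ) - n) / 2)
          - quad (‖x‖ ^ 2) (1 + e) x y ^ (((2 : ℝ) - n) / 2))
        - (((n : ℝ) - 2) / 2) * ((1 - ‖y‖ ^ 2) * (e * (quad 1 (‖x‖ ^ 2 + e) x y ^ (((2 : ℝ) - n) / 2 - 2)
          - ‖x‖ ^ 2 * quad (‖x‖ ^ 2) (1 + e) x y ^ (((2 : ℝ) - n) / 2 - 2))))) = 0 := by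
  have ha : ∀ y, 0 < quad 1 (‖x‖ ^ 2 + e) x y := fun y => by rw [quad_one]; positivity
  have hb : ∀ y, 0 < quad (‖x‖ ^ 2) (1 + e) x y := fun y =>
    lt_of_lt_of_le (by positivity) (quad_two_ge e x y)
  set p : ℝ := ((2 : ℝ) - n) / 2 with hp
  have hd : ∀ i, ∫ y in ball (0 : EuclideanSpace ℝ (Fin n)) 1,
      (fderiv ℝ (field 1 (‖x‖ ^ 2 + e) p x i) y (EuclideanSpace.single i 1)
       - fderiv ℝ (field (‖x‖ ^ 2) (1 + e) p x i) y (EuclideanSpace.single i 1)) = 0 := by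
    intro i
    have h1 := contDiff_field 1 (‖x‖ ^ 2 + e) p x i ha
    have h2 := contDiff_field (‖x‖ ^ 2) (1 + e) p x i hb
    rw [← integral_ball_fderiv_eq_zero _ (h1.sub h2) _ (EuclideanSpace.single i 1)]
    · congr 1
      funext y
      rw [fderiv_fun_sub ((h1.differentiable (by simp)) y) ((h2.differentiable (by simp)) y)]
      rfl
    · intro y hy
      have : quad (‖x‖ ^ 2) (1 + e) x y = quad 1 (‖x‖ ^ 2 + e) x y := by
        unfold quad; rw [hy]; ring
      simp [field, this, hy]
  have hsum : ∫ y in ball (0 : EuclideanSpace ℝ (Fin n)) 1, ∑ i,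
      (fderiv ℝ (field 1 (‖x‖ ^ 2 + e) p x i) y (EuclideanSpace.single i 1)
       - fderiv ℝ (field (‖x‖ ^ 2) (1 + e) p x i) y (EuclideanSpace.single i 1)) = 0 := by
    rw [integral_finsetSum]
    · exact Finset.sum_eq_zero fun i _ => hd i
    · intro i _
      apply Continuous.integrableOn_unit_ball
      have h1 := (contDiff_field 1 (‖x‖ ^ 2 + e) p x i ha).continuous_fderiv (by simp)
      have h2 := (contDiff_field (‖x‖ ^ 2) (1 + e) p x i hb).continuous_fderiv (by simp)
      fun_prop
  simp_rw [Finset.sum_sub_distrib] at hsum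
  rw [hp] at hsum
  simp_rw [sum_fderiv_field _ _ x ha, sum_fderiv_field _ _ x hb] at hsum
  rw [← hp] at hsum
  have hn0 : (-2 * (n : ℝ)) ≠ 0 := by
    have : (0 : ℝ) < n := by positivity
    linarith
  apply mul_left_cancel₀ hn0
  rw [← integral_const_mul, mul_zero, ← hsum]
  congr 1
  funext y
  have : (n : ℝ) = 2 - 2 * p := by rw [hp]; ring
  rw [this]
  ring

lemma unitBallVol_pos (n : ℕ) : 0 < unitBallVol n :=
  ENNReal.toReal_pos (measure_ball_pos volume _ one_pos).ne' measure_ball_lt_top.ne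

lemma integrable_newton (n : ℕ) (hn : 3 ≤ n) (x : EuclideanSpace ℝ (Fin n)) :
    IntegrableOn (fun y => ‖x - y‖ ^ ((2 : ℝ) - n)) (ball (0 : EuclideanSpace ℝ (Fin n)) 1) := by
  have hloc : LocallyIntegrable (fun y : EuclideanSpace ℝ (Fin n) => ‖y‖ ^ ((2 : ℝ) - n)) := by
    apply locallyIntegrable_of_norm_le_rpow (C := 1) (α := (n : ℝ) - 2)
      (by simp; omega) (by simp)
    · refine Eventually.of_forall fun y => ?_
      rw [Real.norm_eq_abs, abs_of_nonneg (by positivity), one_mul, neg_sub]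
    · exact Measurable.aestronglyMeasurable (by fun_prop)
  have hball : IntegrableOn (fun y : EuclideanSpace ℝ (Fin n) => ‖y‖ ^ ((2 : ℝ) - n)) (closedBall (-x) 1) :=
    hloc.integrableOn_isCompact (isCompact_closedBall _ _)
  have hmp : MeasurePreserving (fun y : EuclideanSpace ℝ (Fin n) => y - x) volume volume :=
    measurePreserving_sub_right volume x
  have hme : MeasurableEmbedding (fun y : EuclideanSpace ℝ (Fin n) => y - x) :=
    (Homeomorph.subRight x).measurableEmbedding
  have := (hmp.integrableOn_comp_preimage hme (s := closedBall (-x) 1)).2 hball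
  refine (this.mono_set ?_).congr_fun (fun y _ => by simp [norm_sub_rev]) measurableSet_ball
  intro y hy
  have : ‖y‖ < 1 := by simpa using hy
  simp [dist_eq_norm, this.le]

lemma tendsto_sq_inv : Tendsto (fun c : ℝ => (c ^ 2)⁻¹) atTop (𝓝 0) :=
  (tendsto_pow_atTop (by norm_num : (2 : ℕ) ≠ 0)).inv_tendsto_atTop

lemma quad_two_ge' {n : ℕ} {e : ℝ} (he : 0 ≤ e) {x y : EuclideanSpace ℝ (Fin n)} (hx : ‖x‖ < 1) (hy : ‖y‖ < 1) :
    (1 - ‖x‖) ^ 2 ≤ quad (‖x‖ ^ 2) (1 + e) x y := by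
  refine le_trans ?_ (quad_two_ge e x y)
  have h1 : ‖x‖ * ‖y‖ ≤ ‖x‖ := mul_le_of_le_one_right (norm_nonneg _) hy.le
  have h2 : (1 - ‖x‖) ^ 2 ≤ (1 - ‖x‖ * ‖y‖) ^ 2 := by
    apply pow_le_pow_left₀ <;> linarith
  linarith

lemma tendsto_left (n : ℕ) (hn : 3 ≤ n) (x : EuclideanSpace ℝ (Fin n)) (hx : ‖x‖ < 1) :
    Tendsto (fun c : ℝ => ∫ y in ball (0 : EuclideanSpace ℝ (Fin n)) 1,
      (quad 1 (‖x‖ ^ 2 + (c ^ 2)⁻¹) x y ^ (((2 : ℝ) - n) / 2)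
          - quad (‖x‖ ^ 2) (1 + (c ^ 2)⁻¹) x y ^ (((2 : ℝ) - n) / 2))) atTop
      (𝓝 (∫ y in ball (0 : EuclideanSpace ℝ (Fin n)) 1, (‖x - y‖ ^ ((2 : ℝ) - n) -
      (‖x‖ ^ 2 * ‖y‖ ^ 2 + 1 - 2 * ⟪x, y⟫) ^ (((2 : ℝ) - n) / 2)))) := by
  have : Nontrivial (EuclideanSpace ℝ (Fin n)) := by
    apply Module.nontrivial_of_finrank_pos (R := ℝ); simp; omega
  have hn' : (3 : ℝ) ≤ n := by exact_mod_cast hn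
  have hp : ((2 : ℝ) - n) / 2 ≤ 0 := by linarith
  have hne : ∀ᵐ y ∂(volume.restrict (ball (0 : EuclideanSpace ℝ (Fin n)) 1)), y ≠ x :=
    ae_restrict_of_ae (Measure.ae_ne volume x)
  have hmem : ∀ᵐ y ∂(volume.restrict (ball (0 : EuclideanSpace ℝ (Fin n)) 1)),
      y ∈ ball (0 : EuclideanSpace ℝ (Fin n)) 1 := ae_restrict_mem measurableSet_ball
  have hsq : ∀ y : EuclideanSpace ℝ (Fin n),
      (‖x - y‖ ^ 2) ^ (((2 : ℝ) - n) / 2) = ‖x - y‖ ^ ((2 : ℝ) - n) := by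
    intro y
    rw [← rpow_natCast, ← rpow_mul (norm_nonneg _)]
    congr 1; push_cast; ring
  apply tendsto_integral_filter_of_dominated_convergence
    (fun y => ‖x - y‖ ^ ((2 : ℝ) - n) + ((1 - ‖x‖) ^ 2) ^ (((2 : ℝ) - n) / 2))
  · refine Eventually.of_forall fun c => ?_
    have h1 := (contDiff_quad 1 (‖x‖ ^ 2 + (c ^ 2)⁻¹) x).continuous.measurable
    have h2 := (contDiff_quad (‖x‖ ^ 2) (1 + (c ^ 2)⁻¹) x).continuous.measurable
    exact ((h1.pow_const _).sub (h2.pow_const _)).aestronglyMeasurable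
  · refine Eventually.of_forall fun c => ?_
    have he : 0 ≤ (c ^ 2)⁻¹ := by positivity
    filter_upwards [hne, hmem] with y hy1 hy2
    have hy2 : ‖y‖ < 1 := by simpa using hy2
    have hpos : 0 < ‖x - y‖ := norm_pos_iff.2 (sub_ne_zero.2 (Ne.symm hy1))
    have hxp : 0 < 1 - ‖x‖ := by linarith
    refine (norm_sub_le _ _).trans ?_
    have hb := quad_two_ge' he hx hy2
    have hb0 : 0 < quad (‖x‖ ^ 2) (1 + (c ^ 2)⁻¹) x y := lt_of_lt_of_le (by positivity) hb
    rw [quad_one, Real.norm_eq_abs, Real.norm_eq_abs, abs_of_nonneg (by positivity),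
      abs_of_nonneg (by positivity), ← hsq]
    apply add_le_add
    · exact rpow_le_rpow_of_nonpos (by positivity) (by linarith) hp
    · exact rpow_le_rpow_of_nonpos (by positivity) hb hp
  · exact (integrable_newton n hn x).add (continuous_const.integrableOn_unit_ball)
  · filter_upwards [hne, hmem] with y hy1 hy2
    have hy2 : ‖y‖ < 1 := by simpa using hy2
    have hpos : 0 < ‖x - y‖ := norm_pos_iff.2 (sub_ne_zero.2 (Ne.symm hy1))
    have hxp : 0 < 1 - ‖x‖ := by linarith
    have hb := quad_two_ge' le_rfl hx hy2
    have hb0 : 0 < quad (‖x‖ ^ 2) (1 + 0) x y := lt_of_lt_of_le (by positivity) hb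
    simp only [quad_one]
    rw [← hsq]
    have h1 : Tendsto (fun c : ℝ => ‖x - y‖ ^ 2 + (c ^ 2)⁻¹) atTop (𝓝 (‖x - y‖ ^ 2)) := by
      simpa using tendsto_sq_inv.const_add (‖x - y‖ ^ 2)
    have h2 : Tendsto (fun c : ℝ => quad (‖x‖ ^ 2) (1 + (c ^ 2)⁻¹) x y) atTop
        (𝓝 (‖x‖ ^ 2 * ‖y‖ ^ 2 + 1 - 2 * ⟪x, y⟫)) := by
      have := ((tendsto_sq_inv.const_add 1).const_add (‖x‖ ^ 2 * ‖y‖ ^ 2)).sub_const (2 * ⟪x, y⟫)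
      simpa [quad] using this
    refine (h1.rpow_const (Or.inl (by positivity))).sub (h2.rpow_const (Or.inl ?_))
    simpa [quad] using hb0.ne'

lemma tendsto_peak (n : ℕ) (hn : 3 ≤ n) (x : EuclideanSpace ℝ (Fin n)) (hx : ‖x‖ < 1) :
    Tendsto (fun c : ℝ => ∫ y in ball (0 : EuclideanSpace ℝ (Fin n)) 1,
      (1 - ‖y‖ ^ 2) * ((c ^ 2)⁻¹ * quad 1 (‖x‖ ^ 2 + (c ^ 2)⁻¹) x y ^ (((2 : ℝ) - n) / 2 - 2))) atTop
      (𝓝 (unitBallVol n * (1 - ‖x‖ ^ 2))) := by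
  have hω := unitBallVol_pos n
  have hn' : (3 : ℝ) ≤ n := by exact_mod_cast hn
  set s : ℝ := ((2 : ℝ) - n) / 2 - 2 with hs
  have hs2 : s = -((n : ℝ) + 2) / 2 := by rw [hs]; ring
  set φ : EuclideanSpace ℝ (Fin n) → ℝ := fun z => (unitBallVol n)⁻¹ * (1 + ‖z‖ ^ 2) ^ s with hφ
  set g : EuclideanSpace ℝ (Fin n) → ℝ :=
    (ball (0 : EuclideanSpace ℝ (Fin n)) 1).indicator (fun y => unitBallVol n * (1 - ‖y‖ ^ 2)) with hg
  have hxb : x ∈ ball (0 : EuclideanSpace ℝ (Fin n)) 1 := by simpa using hx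
  have hcont : Continuous (fun y : EuclideanSpace ℝ (Fin n) => unitBallVol n * (1 - ‖y‖ ^ 2)) := by fun_prop
  have hmain := tendsto_integral_comp_smul_smul_of_integrable' (μ := volume) (φ := φ) (g := g) (x₀ := x)
    (fun z => by positivity)
    (by
      rw [hφ, integral_const_mul, hs, integral_one_add_norm_sq_rpow n hn]
      exact inv_mul_cancel₀ hω.ne')
    (by
      have hlim : Tendsto (fun z : EuclideanSpace ℝ (Fin n) => (unitBallVol n)⁻¹ * (‖z‖ ^ 2)⁻¹)
          (Bornology.cobounded _) (𝓝 ((unitBallVol n)⁻¹ * 0)) :=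
        (tendsto_sq_inv.comp tendsto_norm_cobounded_atTop).const_mul _
      rw [mul_zero] at hlim
      refine tendsto_of_tendsto_of_tendsto_of_le_of_le' tendsto_const_nhds hlim
        (Eventually.of_forall fun z => by positivity) ?_
      filter_upwards [tendsto_norm_cobounded_atTop.eventually_gt_atTop 0] with z hz
      rw [hφ, finrank_euclideanSpace, Fintype.card_fin, mul_left_comm]
      gcongr
      have h1 : (1 + ‖z‖ ^ 2) ^ s ≤ (‖z‖ ^ 2) ^ s :=
        rpow_le_rpow_of_nonpos (by positivity) (by linarith) (by linarith)
      refine (mul_le_mul_of_nonneg_left h1 (by positivity)).trans (le_of_eq ?_)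
      rw [← rpow_natCast, ← rpow_natCast, ← rpow_mul hz.le, ← rpow_add hz, ← rpow_neg hz.le]
      congr 1
      rw [hs2]; push_cast; ring)
    (by
      rw [hg, integrable_indicator_iff measurableSet_ball]
      exact hcont.integrableOn_unit_ball)
    (by
      refine hcont.continuousAt.congr ?_
      filter_upwards [isOpen_ball.mem_nhds hxb] with u hu
      rw [hg, indicator_of_mem hu])
  rw [hg, indicator_of_mem hxb] at hmain
  refine hmain.congr' ?_
  filter_upwards [eventually_gt_atTop 0] with c hc
  rw [← integral_indicator measurableSet_ball]
  congr 1
  funext y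
  by_cases hy : y ∈ ball (0 : EuclideanSpace ℝ (Fin n)) 1
  · rw [indicator_of_mem hy, indicator_of_mem hy, finrank_euclideanSpace, Fintype.card_fin, hφ, smul_eq_mul,
      quad_one]
    have h1 : 1 + ‖c • (x - y)‖ ^ 2 = c ^ 2 * (‖x - y‖ ^ 2 + (c ^ 2)⁻¹) := by
      rw [norm_smul, mul_pow, Real.norm_eq_abs, sq_abs]
      field_simp
      ring
    have h2 : c ^ n * (c ^ 2) ^ s = (c ^ 2)⁻¹ := by
      rw [← rpow_natCast, ← rpow_natCast, ← rpow_mul hc.le, ← rpow_add hc, ← rpow_neg hc.le]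
      congr 1
      rw [hs2]; push_cast; ring
    simp only [h1]
    rw [mul_rpow (by positivity) (by positivity), ← h2]
    field_simp
  · rw [indicator_of_notMem hy, indicator_of_notMem hy, smul_zero]

lemma tendsto_rest (n : ℕ) (hn : 3 ≤ n) (x : EuclideanSpace ℝ (Fin n)) (hx : ‖x‖ < 1) :
    Tendsto (fun c : ℝ => ∫ y in ball (0 : EuclideanSpace ℝ (Fin n)) 1,
      (1 - ‖y‖ ^ 2) * ((c ^ 2)⁻¹ *
        (‖x‖ ^ 2 * quad (‖x‖ ^ 2) (1 + (c ^ 2)⁻¹) x y ^ (((2 : ℝ) - n) / 2 - 2)))) atTop (𝓝 0) := by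
  have hn' : (3 : ℝ) ≤ n := by exact_mod_cast hn
  have hxp : 0 < 1 - ‖x‖ := by linarith
  set s : ℝ := ((2 : ℝ) - n) / 2 - 2 with hs
  have hlim := tendsto_sq_inv.mul_const (((1 - ‖x‖) ^ 2) ^ s *
    volume.real (ball (0 : EuclideanSpace ℝ (Fin n)) 1))
  rw [zero_mul] at hlim
  refine squeeze_zero_norm (fun c => ?_) hlim
  have he : 0 ≤ (c ^ 2)⁻¹ := by positivity
  rw [← mul_assoc]
  apply norm_setIntegral_le_of_norm_le_const measure_ball_lt_top
  intro y hy
  have hy : ‖y‖ < 1 := by simpa using hy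
  have hb := quad_two_ge' he hx hy
  have hb0 : 0 < quad (‖x‖ ^ 2) (1 + (c ^ 2)⁻¹) x y := lt_of_lt_of_le (by positivity) hb
  have h1 : ‖y‖ ^ 2 ≤ 1 := pow_le_one₀ (norm_nonneg _) hy.le
  have h2 : ‖x‖ ^ 2 ≤ 1 := pow_le_one₀ (norm_nonneg _) hx.le
  have h3 : quad (‖x‖ ^ 2) (1 + (c ^ 2)⁻¹) x y ^ s ≤ ((1 - ‖x‖) ^ 2) ^ s :=
    rpow_le_rpow_of_nonpos (by positivity) hb (by linarith)
  have h4 : 0 ≤ 1 - ‖y‖ ^ 2 := by linarith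
  rw [Real.norm_eq_abs, abs_of_nonneg (by positivity)]
  calc _ ≤ 1 * ((c ^ 2)⁻¹ * (1 * ((1 - ‖x‖) ^ 2) ^ s)) := by
        gcongr
        linarith [sq_nonneg ‖y‖]
    _ = _ := by ring

/-- For every `x` in the unit ball `B` of `ℝⁿ`, `n ≥ 3`,
`∫_B G(x, y) dy = (1 - |x|²)/(2n)`. -/
theorem integral_greenFn (n : ℕ) (hn : 3 ≤ n) :
    ∀ x ∈ ball (0 : EuclideanSpace ℝ (Fin n)) 1,
      ∫ y in ball (0 : EuclideanSpace ℝ (Fin n)) 1, greenFn n x y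
        = (1 - ‖x‖ ^ 2) / (2 * n) := by
  intro x hx
  have hx : ‖x‖ < 1 := by simpa using hx
  have hn' : (3 : ℝ) ≤ n := by exact_mod_cast hn
  have hω := unitBallVol_pos n
  have hlim := ((tendsto_peak n hn x hx).sub (tendsto_rest n hn x hx)).const_mul (((n : ℝ) - 2) / 2)
  have hval := tendsto_nhds_unique (tendsto_left n hn x hx) (hlim.congr' (by
    filter_upwards [eventually_gt_atTop 0] with c hc
    have he : 0 < (c ^ 2)⁻¹ := by positivity
    have ha : ∀ y, 0 < quad 1 (‖x‖ ^ 2 + (c ^ 2)⁻¹) x y := fun y => by rw [quad_one]; positivity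
    have hb : ∀ y, 0 < quad (‖x‖ ^ 2) (1 + (c ^ 2)⁻¹) x y := fun y =>
      lt_of_lt_of_le (by positivity) (quad_two_ge _ x y)
    have hid := green_identity n hn x _ he
    have ca := fun s => continuous_quad_rpow _ _ s x ha
    have cb := fun s => continuous_quad_rpow _ _ s x hb
    have ca1 := ca (((2 : ℝ) - n) / 2)
    have cb1 := cb (((2 : ℝ) - n) / 2)
    have ca2 := ca (((2 : ℝ) - n) / 2 - 2)
    have cb2 := cb (((2 : ℝ) - n) / 2 - 2)
    rw [integral_sub (Continuous.integrableOn_unit_ball (by fun_prop))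
      (Continuous.integrableOn_unit_ball (by fun_prop)), sub_eq_zero, integral_const_mul] at hid
    rw [hid, ← integral_sub (Continuous.integrableOn_unit_ball (by fun_prop))
      (Continuous.integrableOn_unit_ball (by fun_prop))]
    congr 2
    funext y
    ring))
  unfold greenFn
  rw [integral_const_mul, hval]
  have : (n : ℝ) - 2 ≠ 0 := by linarith
  field_simp
  ring
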